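/- arXiv:1910.07902 — 4 statements merged into one kernel-verified Lean document; each statement's English description precedes it below -/
import Mathlib

section
/- Let i denote the imaginary unit. Then (i/6) · ∫_{-∞}^{∞} (−3iξ² − 9ξ + 8i)(24ξ − 24ξ³) / ((ξ − i)³ (1 + ξ²)⁴) dξ = (7/8)π. -/
open Complex MeasureTheory

lemma aux_ne (c : ℂ) (hc : c.im ≠ 0) (x : ℝ) : (x : ℂ) - c ≠ 0 := by
  intro h
  apply hc
  have := congrArg Complex.im h
  simpa using this

lemma aux_int (c : ℂ) (hc : c = I ∨ c = -I) (k : ℕ) :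
    Integrable (fun x : ℝ => (((x : ℂ) - c) ^ (k + 2))⁻¹) := by
  have hi : c.im ≠ 0 := by rcases hc with rfl | rfl <;> simp
  refine integrable_inv_one_add_sq.mono' ?_ ?_
  · apply Continuous.aestronglyMeasurable
    refine Continuous.inv₀ (by fun_prop) fun x => pow_ne_zero _ (aux_ne c hi x)
  · refine Filter.Eventually.of_forall fun x => ?_
    have h2 : ‖(x : ℂ) - c‖ ^ 2 = 1 + x ^ 2 := by
      rw [← Complex.normSq_eq_norm_sq, Complex.normSq_apply]
      rcases hc with rfl | rfl <;> simp <;> ring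
    have h1 : 1 ≤ ‖(x : ℂ) - c‖ := by
      nlinarith [sq_nonneg x, norm_nonneg ((x : ℂ) - c)]
    rw [norm_inv, norm_pow, ← h2]
    have := pow_le_pow_right₀ h1 (show 2 ≤ k + 2 by omega)
    gcongr

lemma aux_zero (c : ℂ) (hc : c = I ∨ c = -I) (k : ℕ) :
    ∫ x : ℝ, (((x : ℂ) - c) ^ (k + 2))⁻¹ = 0 := by
  have hi : c.im ≠ 0 := by rcases hc with rfl | rfl <;> simp
  have hd : ∀ x : ℝ, HasDerivAt (fun x : ℝ => (-1 / ((k : ℂ) + 1)) * (((x : ℂ) - c) ^ (k + 1))⁻¹)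
      ((((x : ℂ) - c) ^ (k + 2))⁻¹) x := by
    intro x
    have h0 := aux_ne c hi x
    have h1 : HasDerivAt (fun x : ℝ => (x : ℂ) - c) 1 x :=
      (Complex.ofRealCLM.hasDerivAt (x := x)).sub_const c
    have h2 := ((h1.fun_pow (k + 1)).fun_inv (pow_ne_zero _ h0)).const_mul (-1 / ((k : ℂ) + 1))
    refine h2.congr_deriv ?_
    have hk : (k : ℂ) + 1 ≠ 0 := by exact_mod_cast Nat.succ_ne_zero k
    push_cast
    field_simp
    try ring
  have ht : ∀ l : Filter ℝ, Filter.Tendsto (fun x : ℝ => ‖x‖) l Filter.atTop →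
      Filter.Tendsto (fun x : ℝ => (-1 / ((k : ℂ) + 1)) * (((x : ℂ) - c) ^ (k + 1))⁻¹) l
        (nhds 0) := by
    intro l hl
    have a1 : Filter.Tendsto (fun x : ℝ => (x : ℂ) - c) l (Bornology.cobounded ℂ) := by
      rw [← tendsto_norm_atTop_iff_cobounded]
      refine Filter.tendsto_atTop_mono (f := fun x : ℝ => ‖x‖ - ‖c‖) (fun x => ?_)
        (Filter.tendsto_atTop_add_const_right _ _ hl)
      have := norm_sub_norm_le (x : ℂ) c
      simpa using this
    have a2 := ((Filter.tendsto_inv₀_cobounded.comp a1).pow (k + 1)).const_mul (-1 / ((k : ℂ) + 1))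
    simpa [Function.comp_def] using a2
  have := integral_of_hasDerivAt_of_tendsto hd (aux_int c hc k)
    (ht _ Filter.tendsto_abs_atBot_atTop) (ht _ Filter.tendsto_abs_atTop_atTop)
  simpa using this

lemma aux_pf (z : ℂ) (h1 : z - I ≠ 0) (h2 : z - -I ≠ 0) :
    ((-3 * I * z ^ 2 - 9 * z + 8 * I) * (24 * z - 24 * z ^ 3)) / ((z - I) ^ 3 * (1 + z ^ 2) ^ 4)
    = -(21 / 4) * I * (1 + z ^ 2)⁻¹ + (-6 * ((z - I) ^ (5 + 2))⁻¹ + (-9 * I * ((z - I) ^ (4 + 2))⁻¹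
      + (9 * ((z - I) ^ (3 + 2))⁻¹ + (3 / 8 * ((z - I) ^ (1 + 2))⁻¹
      + (21 / 16 * I * ((z - I) ^ (0 + 2))⁻¹ + (-(15 / 2) * I * ((z - -I) ^ (2 + 2))⁻¹
      + (-(45 / 8) * ((z - -I) ^ (1 + 2))⁻¹ + 63 / 16 * I * ((z - -I) ^ (0 + 2))⁻¹))))))) := by
  have e : 1 + z ^ 2 = (z - I) * (z - -I) := by linear_combination I_sq
  rw [e]
  obtain ⟨w, rfl⟩ : ∃ w, z = w + I := ⟨z - I, by ring⟩
  simp only [sub_neg_eq_add, add_sub_cancel_right] at *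
  have h3 : w + 2 * I ≠ 0 := by convert h2 using 1; ring
  rw [show w + I + I = w + 2 * I by ring]
  obtain ⟨v, hv⟩ : ∃ v, v = w + 2 * I := ⟨_, rfl⟩
  rw [← hv] at h3 ⊢
  field_simp
  subst hv
  have i2 : I ^ 2 = -1 := I_sq
  have i3 : I ^ 3 = -I := by rw [pow_succ, i2]; ring
  have i4 : I ^ 4 = 1 := by simp
  have i5 : I ^ 5 = I := by rw [pow_succ, i4]; ring
  have i6 : I ^ 6 = -1 := by rw [pow_succ, i5, ← i2]; ring
  have i7 : I ^ 7 = -I := by rw [pow_succ, i6]; ring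
  have i8 : I ^ 8 = 1 := by rw [pow_succ, i7]; linear_combination -i2
  have i9 : I ^ 9 = I := by rw [pow_succ, i8]; ring
  have i10 : I ^ 10 = -1 := by rw [show I ^ 10 = I ^ 2 * I ^ 8 by ring, i8, i2]; ring
  have i11 : I ^ 11 = -I := by rw [show I ^ 11 = I ^ 3 * I ^ 8 by ring, i8, i3]; ring
  have i12 : I ^ 12 = 1 := by rw [show I ^ 12 = I ^ 4 * I ^ 8 by ring, i8, i4]; ring
  have i13 : I ^ 13 = I := by rw [show I ^ 13 = I ^ 5 * I ^ 8 by ring, i8, i5]; ring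
  have i14 : I ^ 14 = -1 := by rw [show I ^ 14 = I ^ 6 * I ^ 8 by ring, i8, i6]; ring
  have i15 : I ^ 15 = -I := by rw [show I ^ 15 = I ^ 7 * I ^ 8 by ring, i8, i7]; ring
  ring_nf
  simp only [i2, i3, i4, i5, i6, i7, i8, i9, i10, i11, i12, i13, i14, i15]
  ring

theorem stmt_0 :
    (I / 6) * ∫ ξ : ℝ,
        ((-3 * I * (ξ : ℂ) ^ 2 - 9 * (ξ : ℂ) + 8 * I) * (24 * (ξ : ℂ) - 24 * (ξ : ℂ) ^ 3)) /
          (((ξ : ℂ) - I) ^ 3 * (1 + (ξ : ℂ) ^ 2) ^ 4)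
      = (7 / 8) * (Real.pi : ℂ) := by
  have hI := fun k => aux_int I (Or.inl rfl) k
  have hJ := fun k => aux_int (-I) (Or.inr rfl) k
  have hA : Integrable (fun x : ℝ => (1 + (x : ℂ) ^ 2)⁻¹) := by
    have := integrable_inv_one_add_sq.ofReal (𝕜 := ℂ)
    simpa using this
  have vA : ∫ x : ℝ, (1 + (x : ℂ) ^ 2)⁻¹ = (Real.pi : ℂ) := by
    rw [← integral_univ_inv_one_add_sq, ← integral_complex_ofReal]
    simp
  have b1 := (hJ 0).const_mul (63 / 16 * I)
  have b2 := ((hJ 1).const_mul (-(45 / 8))).fun_add b1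
  have b3 := ((hJ 2).const_mul (-(15 / 2) * I)).fun_add b2
  have b4 := ((hI 0).const_mul (21 / 16 * I)).fun_add b3
  have b5 := ((hI 1).const_mul (3 / 8)).fun_add b4
  have b6 := ((hI 3).const_mul 9).fun_add b5
  have b7 := ((hI 4).const_mul (-9 * I)).fun_add b6
  have b8 := ((hI 5).const_mul (-6)).fun_add b7
  rw [integral_congr_ae (Filter.Eventually.of_forall fun x : ℝ =>
    aux_pf (x : ℂ) (aux_ne I (by simp) x) (aux_ne (-I) (by simp) x))]
  rw [integral_add (hA.const_mul _) b8, integral_add ((hI 5).const_mul _) b7,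
    integral_add ((hI 4).const_mul _) b6, integral_add ((hI 3).const_mul _) b5,
    integral_add ((hI 1).const_mul _) b4, integral_add ((hI 0).const_mul _) b3,
    integral_add ((hJ 2).const_mul _) b2, integral_add ((hJ 1).const_mul _) b1]
  simp only [integral_const_mul, vA, aux_zero I (Or.inl rfl), aux_zero (-I) (Or.inr rfl)]
  linear_combination (-(7 / 8) * (Real.pi : ℂ)) * I_sq
end

section
/- Let i denote the imaginary unit. Then (i/2) · ∫_{-∞}^{∞} (4iξ − 9ξ² − 3iξ³) / ((ξ − i)³ (1 + ξ²)⁴) dξ = (11/128)π. -/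
open Complex MeasureTheory

lemma aux_pos (x : ℝ) : 0 < 1 + x ^ 2 := by positivity

lemma aux_v (x : ℝ) : HasDerivAt (fun x : ℝ => (1 + x ^ 2)⁻¹) (-(2 * x) * ((1 + x ^ 2)⁻¹) ^ 2) x := by
  have h : HasDerivAt (fun x : ℝ => 1 + x ^ 2) (2 * x) x := by
    simpa using (hasDerivAt_pow 2 x).const_add 1
  refine (h.inv (aux_pos x).ne').congr_deriv ?_
  have := aux_pos x
  field_simp

lemma aux_tv (l : Filter ℝ) (h : Filter.Tendsto (fun x : ℝ => x⁻¹) l (nhds 0)) :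
    Filter.Tendsto (fun x : ℝ => x * (1 + x ^ 2)⁻¹) l (nhds 0) ∧
    Filter.Tendsto (fun x : ℝ => (1 + x ^ 2)⁻¹) l (nhds 0) ∨ ¬ (∀ᶠ x in l, x ≠ 0) := by
  by_cases hl : ∀ᶠ x in l, x ≠ 0
  · left
    constructor
    · refine squeeze_zero_norm' ?_ (by simpa using h.norm)
      filter_upwards [hl] with x hx
      have := aux_pos x
      rw [norm_mul, Real.norm_eq_abs, Real.norm_eq_abs, abs_inv, abs_of_pos this]
      have hx' : 0 < |x| := abs_pos.mpr hx
      rw [← div_eq_mul_inv, inv_eq_one_div, div_le_div_iff₀ this hx', ← sq, sq_abs]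
      linarith
    · refine squeeze_zero_norm' ?_ (by simpa using h.norm.pow 2)
      filter_upwards [hl] with x hx
      have := aux_pos x
      rw [Real.norm_eq_abs, abs_of_pos (inv_pos.mpr this)]
      exact inv_anti₀ (by positivity) (by linarith)
  · right; exact hl

/-- numerators over `(1+x^2)^7` -/
noncomputable def auxA (x : ℝ) : ℝ := (4 * x + 12 * x ^ 3) * ((1 + x ^ 2)⁻¹) ^ 7
noncomputable def auxB (x : ℝ) : ℝ := (3 * x ^ 2 + 14 * x ^ 4 + 3 * x ^ 6) * ((1 + x ^ 2)⁻¹) ^ 7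

lemma aux_int_s2 (f : ℝ → ℝ) (hf : Continuous f) (hb : ∀ x, |f x| ≤ 20 * (1 + x ^ 2) ^ 6) :
    Integrable (fun x : ℝ => f x * ((1 + x ^ 2)⁻¹) ^ 7) := by
  refine (integrable_inv_one_add_sq.const_mul 20).mono' ?_ ?_
  · refine Continuous.aestronglyMeasurable (hf.mul ?_)
    exact (Continuous.inv₀ (by fun_prop) (fun x => (aux_pos x).ne')).pow 7
  · refine Filter.Eventually.of_forall fun x => ?_
    have := aux_pos x
    rw [norm_mul, Real.norm_eq_abs, Real.norm_of_nonneg (by positivity)]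
    calc |f x| * ((1 + x ^ 2)⁻¹) ^ 7 ≤ (20 * (1 + x ^ 2) ^ 6) * ((1 + x ^ 2)⁻¹) ^ 7 := by
          gcongr; exact hb x
      _ = _ := by field_simp

lemma auxA_int : Integrable auxA := by
  refine aux_int_s2 _ (by fun_prop) fun x => ?_
  have h1 : |4 * x + 12 * x ^ 3| ≤ 20 * (1 + x ^ 2) ^ 2 := by
    rw [abs_le]
    constructor <;> nlinarith [sq_nonneg (x + 1), sq_nonneg (x - 1), sq_nonneg (x * (x + 1)), sq_nonneg (x * (x - 1)), sq_nonneg x, sq_nonneg (x^2)]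
  refine h1.trans ?_
  gcongr
  · nlinarith [sq_nonneg x]
  · norm_num

lemma auxB_int : Integrable auxB := by
  refine aux_int_s2 _ (by fun_prop) fun x => ?_
  rw [abs_of_nonneg (by positivity)]
  have h1 : 3 * x ^ 2 + 14 * x ^ 4 + 3 * x ^ 6 ≤ 20 * (1 + x ^ 2) ^ 3 := by
    have : 0 ≤ 20 + 57 * x ^ 2 + 46 * x ^ 4 + 17 * x ^ 6 := by positivity
    linarith
  refine h1.trans ?_
  gcongr
  · nlinarith [sq_nonneg x]
  · norm_num

lemma aux_top : Filter.Tendsto (fun x : ℝ => x * (1 + x ^ 2)⁻¹) Filter.atTop (nhds 0) ∧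
    Filter.Tendsto (fun x : ℝ => (1 + x ^ 2)⁻¹) Filter.atTop (nhds 0) :=
  (aux_tv _ tendsto_inv_atTop_zero).resolve_right (not_not.mpr (Filter.eventually_ne_atTop 0))

lemma aux_bot : Filter.Tendsto (fun x : ℝ => x * (1 + x ^ 2)⁻¹) Filter.atBot (nhds 0) ∧
    Filter.Tendsto (fun x : ℝ => (1 + x ^ 2)⁻¹) Filter.atBot (nhds 0) :=
  (aux_tv _ tendsto_inv_atBot_zero).resolve_right (not_not.mpr (Filter.eventually_ne_atBot 0))

lemma auxA_val : ∫ x, auxA x = 0 := by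
  have key : ∀ l : Filter ℝ, Filter.Tendsto (fun x : ℝ => (1 + x ^ 2)⁻¹) l (nhds 0) →
      Filter.Tendsto (fun x : ℝ => -(6 / 5) * ((1 + x ^ 2)⁻¹) ^ 5 + 2 / 3 * ((1 + x ^ 2)⁻¹) ^ 6) l (nhds 0) := by
    intro l h
    simpa using ((h.pow 5).const_mul (-(6 / 5))).add ((h.pow 6).const_mul (2 / 3))
  rw [integral_of_hasDerivAt_of_tendsto (fun x => ?_) auxA_int (key _ aux_bot.2) (key _ aux_top.2)]
  · simp
  · have h := aux_v x
    refine (((h.pow 5).const_mul (-(6 / 5))).add ((h.pow 6).const_mul (2 / 3))).congr_deriv ?_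
    have := aux_pos x
    unfold auxA
    push_cast
    field_simp
    ring

lemma auxB_val : ∫ x, auxB x = 11 / 64 * Real.pi := by
  have key : ∀ (l : Filter ℝ) (c : ℝ), Filter.Tendsto (fun x : ℝ => x * (1 + x ^ 2)⁻¹) l (nhds 0) →
      Filter.Tendsto (fun x : ℝ => (1 + x ^ 2)⁻¹) l (nhds 0) → Filter.Tendsto Real.arctan l (nhds c) →
      Filter.Tendsto (fun x : ℝ => (x * (1 + x ^ 2)⁻¹) * (11 / 64 + 11 / 96 * (1 + x ^ 2)⁻¹
        + 11 / 120 * ((1 + x ^ 2)⁻¹) ^ 2 + -(7 / 20) * ((1 + x ^ 2)⁻¹) ^ 3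
        + -(13 / 15) * ((1 + x ^ 2)⁻¹) ^ 4 + 2 / 3 * ((1 + x ^ 2)⁻¹) ^ 5) + 11 / 64 * Real.arctan x)
        l (nhds (11 / 64 * c)) := by
    intro l c h1 h hc
    simpa using (h1.mul ((((((h.const_mul (11 / 96)).const_add (11 / 64)).add
      ((h.pow 2).const_mul (11 / 120))).add ((h.pow 3).const_mul (-(7 / 20)))).add
      ((h.pow 4).const_mul (-(13 / 15)))).add ((h.pow 5).const_mul (2 / 3)))).add (hc.const_mul (11 / 64))
  rw [integral_of_hasDerivAt_of_tendsto (fun x => ?_) auxB_int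
    (key _ _ aux_bot.1 aux_bot.2 (Real.tendsto_arctan_atBot.mono_right nhdsWithin_le_nhds))
    (key _ _ aux_top.1 aux_top.2 (Real.tendsto_arctan_atTop.mono_right nhdsWithin_le_nhds))]
  · ring
  · have h := aux_v x
    refine ((((hasDerivAt_id x).mul h).mul ((((((h.const_mul (11 / 96)).const_add (11 / 64)).add
      ((h.pow 2).const_mul (11 / 120))).add ((h.pow 3).const_mul (-(7 / 20)))).add
      ((h.pow 4).const_mul (-(13 / 15)))).add ((h.pow 5).const_mul (2 / 3)))).add
      ((Real.hasDerivAt_arctan x).const_mul (11 / 64))).congr_deriv ?_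
    have := aux_pos x
    unfold auxB
    simp
    field_simp
    ring

theorem stmt_2 :
    (I / 2) * ∫ ξ : ℝ,
        (4 * I * (ξ : ℂ) - 9 * (ξ : ℂ) ^ 2 - 3 * I * (ξ : ℂ) ^ 3) /
          (((ξ : ℂ) - I) ^ 3 * (1 + (ξ : ℂ) ^ 2) ^ 4)
      = (11 / 128) * (Real.pi : ℂ) := by
  have e : ∀ ξ : ℝ, (4 * I * (ξ : ℂ) - 9 * (ξ : ℂ) ^ 2 - 3 * I * (ξ : ℂ) ^ 3) /
          (((ξ : ℂ) - I) ^ 3 * (1 + (ξ : ℂ) ^ 2) ^ 4) = (auxA ξ : ℂ) - I * (auxB ξ : ℂ) := by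
    intro ξ
    have h0 : (1 + (ξ : ℂ) ^ 2) ≠ 0 := by exact_mod_cast (aux_pos ξ).ne'
    have hf : (1 + (ξ : ℂ) ^ 2) = ((ξ : ℂ) - I) * ((ξ : ℂ) + I) := by
      linear_combination I_sq
    have h1 : (ξ : ℂ) - I ≠ 0 := fun h => h0 (by rw [hf, h, zero_mul])
    have h2 : (ξ : ℂ) + I ≠ 0 := fun h => h0 (by rw [hf, h, mul_zero])
    have h3 : (4 * I * (ξ : ℂ) - 9 * (ξ : ℂ) ^ 2 - 3 * I * (ξ : ℂ) ^ 3) * ((ξ : ℂ) + I) ^ 3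
        = (4 * ξ + 12 * ξ ^ 3) - I * (3 * ξ ^ 2 + 14 * ξ ^ 4 + 3 * ξ ^ 6) := by
      have e3 : I ^ 3 = -I := I_pow_three
      have e4 : I ^ 4 = 1 := I_pow_four
      ring_nf
      simp only [I_sq, e3, e4]
      ring
    have h4 : (1 + (ξ : ℂ) ^ 2) ^ 7 = (((ξ : ℂ) - I) ^ 3 * (1 + (ξ : ℂ) ^ 2) ^ 4) * ((ξ : ℂ) + I) ^ 3 := by
      rw [hf]; ring
    rw [← mul_div_mul_right _ _ (pow_ne_zero 3 h2), h3, ← h4]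
    unfold auxA auxB
    push_cast
    rw [inv_pow]
    ring
  simp_rw [e]
  have hA : Integrable (fun x : ℝ => (auxA x : ℂ)) := auxA_int.ofReal
  have hB : Integrable (fun x : ℝ => (auxB x : ℂ)) := auxB_int.ofReal
  rw [integral_sub hA (hB.const_mul I), integral_const_mul,
    integral_complex_ofReal, integral_complex_ofReal, auxA_val, auxB_val]
  push_cast
  linear_combination (-(11 / 128) * (Real.pi : ℂ)) * I_sq
end

section
/- Let i denote the imaginary unit. Then (i/6) · ∫_{-∞}^{∞} (−24 − 8iξ + 120ξ² + 40iξ³) / ((ξ − i)³ (1 + ξ²)⁴) dξ = −(5/8)π. -/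
open Complex MeasureTheory

lemma aux_ne_s3 (x : ℝ) : ((x : ℂ) - I) ≠ 0 ∧ ((x : ℂ) + I) ≠ 0 := by
  constructor <;> intro h <;> simpa using congrArg Complex.im h

lemma aux_inv (x : ℝ) (c : ℂ) (h : (x : ℂ) + c ≠ 0) :
    HasDerivAt (fun y : ℝ => ((y : ℂ) + c)⁻¹) (-(((x : ℂ) + c)⁻¹) ^ 2) x := by
  have h1 : HasDerivAt (fun y : ℝ => (y : ℂ) + c) 1 x :=
    (Complex.ofRealCLM.hasDerivAt (x := x)).add_const c
  have := h1.inv h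
  refine this.congr_deriv ?_
  rw [inv_pow, neg_div, one_div]

lemma aux_tendsto (c : ℂ) : Filter.Tendsto (fun y : ℝ => ((y : ℂ) + c)⁻¹) Filter.atTop (nhds 0) ∧
    Filter.Tendsto (fun y : ℝ => ((y : ℂ) + c)⁻¹) Filter.atBot (nhds 0) := by
  have hT : Filter.Tendsto (fun y : ℝ => (y : ℂ) + c) (Filter.cocompact ℝ) (Filter.cocompact ℂ) := by
    have h1 : Filter.Tendsto (fun y : ℝ => (y : ℂ)) (Filter.cocompact ℝ) (Filter.cocompact ℂ) :=
      Complex.isometry_ofReal.isClosedEmbedding.tendsto_cocompact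
    exact (Homeomorph.addRight c).isClosedEmbedding.tendsto_cocompact.comp h1
  have h2 := (Filter.tendsto_inv₀_cobounded (α := ℂ))
  rw [Metric.cobounded_eq_cocompact] at h2
  exact ⟨(h2.comp hT).mono_left atTop_le_cocompact, (h2.comp hT).mono_left atBot_le_cocompact⟩

lemma aux_int_s3 : Integrable (fun ξ : ℝ =>
    (-24 - 8 * I * (ξ : ℂ) + 120 * (ξ : ℂ) ^ 2 + 40 * I * (ξ : ℂ) ^ 3) /
          (((ξ : ℂ) - I) ^ 3 * (1 + (ξ : ℂ) ^ 2) ^ 4)) := by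
  have hne : ∀ x : ℝ, (1 + (x : ℂ) ^ 2) ≠ 0 := fun x => by
    have : (0:ℝ) < 1 + x ^ 2 := by positivity
    exact_mod_cast this.ne'
  refine Integrable.mono' (integrable_inv_one_add_sq.const_mul 192) ?_ ?_
  · refine Continuous.aestronglyMeasurable ?_
    refine Continuous.div (by fun_prop) (by fun_prop) fun x => ?_
    exact mul_ne_zero (pow_ne_zero _ (aux_ne_s3 x).1) (pow_ne_zero _ (hne x))
  · refine Filter.Eventually.of_forall fun x => ?_
    have hu : 1 ≤ ‖(x : ℂ) - I‖ := by
      have := Complex.abs_im_le_norm ((x : ℂ) - I)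
      simpa using this
    have hw : ‖(1 + (x : ℂ) ^ 2)‖ = 1 + x ^ 2 := by
      have : (1 + (x : ℂ) ^ 2) = ((1 + x ^ 2 : ℝ) : ℂ) := by push_cast; ring
      rw [this, Complex.norm_real, Real.norm_of_nonneg (by positivity)]
    have hN : ‖(-24 - 8 * I * (x : ℂ) + 120 * (x : ℂ) ^ 2 + 40 * I * (x : ℂ) ^ 3)‖
        ≤ 24 + 8 * |x| + 120 * |x| ^ 2 + 40 * |x| ^ 3 := by
      refine (norm_add_le _ _).trans (add_le_add ((norm_add_le _ _).trans
        (add_le_add ((norm_sub_le _ _).trans (add_le_add ?_ ?_)) ?_)) ?_) <;> simp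
    have hN2 : 24 + 8 * |x| + 120 * |x| ^ 2 + 40 * |x| ^ 3 ≤ 192 * (1 + x ^ 2) ^ 3 := by
      rw [← sq_abs x]
      have h0 := abs_nonneg x
      generalize |x| = t at *
      have h1 : 2 * t ≤ 1 + t ^ 2 := by nlinarith [sq_nonneg (t - 1)]
      have h2 : 2 * t ^ 3 ≤ t ^ 2 + t ^ 4 := by nlinarith [sq_nonneg (t * (t - 1))]
      have h3 : 0 ≤ t ^ 6 := by positivity
      have h4 : 0 ≤ t ^ 4 := by positivity
      nlinarith
    have hp : (0:ℝ) < 1 + x ^ 2 := by positivity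
    rw [norm_div, norm_mul, norm_pow, norm_pow, hw]
    have hu3 : 1 ≤ ‖(x : ℂ) - I‖ ^ 3 := one_le_pow₀ hu
    calc _ ≤ 192 * (1 + x ^ 2) ^ 3 / (1 * (1 + x ^ 2) ^ 4) := by
            gcongr
            exact hN.trans hN2
      _ = _ := by field_simp

lemma aux_arctan (x : ℝ) :
    HasDerivAt (fun y : ℝ => ((Real.arctan y : ℝ) : ℂ)) (((x : ℂ) + -I)⁻¹ * ((x : ℂ) + I)⁻¹) x := by
  have := (Real.hasDerivAt_arctan x).ofReal_comp
  convert this using 1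
  rw [← mul_inv]
  push_cast
  rw [one_div]
  congr 1
  linear_combination -I_sq

theorem stmt_3 :
    (I / 6) * ∫ ξ : ℝ,
        (-24 - 8 * I * (ξ : ℂ) + 120 * (ξ : ℂ) ^ 2 + 40 * I * (ξ : ℂ) ^ 3) /
          (((ξ : ℂ) - I) ^ 3 * (1 + (ξ : ℂ) ^ 2) ^ 4)
      = -(5 / 8) * (Real.pi : ℂ) := by
  let p : ℂ → ℂ → ℂ → ℂ := fun U V A => U ^ 6 + I * U ^ 5 - 1 / 4 * U ^ 4 + 5 / 16 * U ^ 2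
    + 23 / 16 * I * U - I / 2 * V ^ 3 - 19 / 16 * V ^ 2 + 37 / 16 * I * V + 15 / 4 * I * A
  have hp : Continuous (fun z : ℂ × ℂ × ℂ => p z.1 z.2.1 z.2.2) := by
    simp only [p]; fun_prop
  have lim : ∀ (l : Filter ℝ) (a : ℂ),
      Filter.Tendsto (fun y : ℝ => ((y : ℂ) + -I)⁻¹) l (nhds 0) →
      Filter.Tendsto (fun y : ℝ => ((y : ℂ) + I)⁻¹) l (nhds 0) →
      Filter.Tendsto (fun y : ℝ => ((Real.arctan y : ℝ) : ℂ)) l (nhds a) →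
      Filter.Tendsto (fun y : ℝ => p ((y : ℂ) + -I)⁻¹ ((y : ℂ) + I)⁻¹ (Real.arctan y : ℝ)) l
        (nhds (p 0 0 a)) := by
    intro l a h1 h2 h3
    clear_value p
    exact (hp.tendsto (0, 0, a)).comp (h1.prodMk_nhds (h2.prodMk_nhds h3))
  have top := lim Filter.atTop ((Real.pi / 2 : ℝ) : ℂ) (aux_tendsto _).1 (aux_tendsto _).1
    ((Complex.continuous_ofReal.tendsto _).comp
      (Real.tendsto_arctan_atTop.mono_right nhdsWithin_le_nhds))
  have bot := lim Filter.atBot ((-(Real.pi / 2) : ℝ) : ℂ) (aux_tendsto _).2 (aux_tendsto _).2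
    ((Complex.continuous_ofReal.tendsto _).comp
      (Real.tendsto_arctan_atBot.mono_right nhdsWithin_le_nhds))
  rw [integral_of_hasDerivAt_of_tendsto (fun x => ?_) aux_int_s3 bot top]
  · simp only [p]
    push_cast
    linear_combination (5 / 8 * (Real.pi : ℂ)) * I_sq
  · have hu : (x : ℂ) + -I ≠ 0 := by simpa [sub_eq_add_neg] using (aux_ne_s3 x).1
    have hv := (aux_ne_s3 x).2
    have dU := aux_inv x (-I) hu
    have dV := aux_inv x I hv
    have dA := aux_arctan x
    have := ((((((((dU.pow 6).add ((dU.pow 5).const_mul I)).sub ((dU.pow 4).const_mul (1/4))).add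
      ((dU.pow 2).const_mul (5/16))).add (dU.const_mul (23/16*I))).sub
      ((dV.pow 3).const_mul (I/2))).sub ((dV.pow 2).const_mul (19/16))).add
      (dV.const_mul (37/16*I))).add (dA.const_mul (15/4*I))
    refine HasDerivAt.congr_deriv (f := _) this ?_
    have hw : (1 + (x : ℂ) ^ 2) = ((x : ℂ) + -I) * ((x : ℂ) + I) := by
      linear_combination I_sq
    rw [hw, sub_eq_add_neg (x : ℂ) I]
    have hi := I_sq
    generalize (x : ℂ) = X at *
    obtain ⟨v, rfl⟩ : ∃ v, X = v - I := ⟨X + I, by ring⟩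
    generalize I = J at *
    rw [eq_div_iff (by positivity)]
    field_simp
    push_cast
    grind
end

section
/- Let i denote the imaginary unit and consider the function F(z) = (−5iz − 3iz³)/(1 + z²)³ − (9i − 7z)/(8(z − i)³), defined for complex z with z ∉ {i, −i}. Then F(z) tends to the limit −1/4 as z → i (through values z ∉ {i, −i}). In other words, the part of (−5iξ − 3iξ³)/(1 + ξ²)³ with its only pole at ξ = i and vanishing at infinity is (9i − 7ξ)/(8(ξ − i)³). -/
open Complex Filter Topology

theorem stmt_16 :
    Tendsto
      (fun z : ℂ =>
        (-5 * I * z - 3 * I * z ^ 3) / (1 + z ^ 2) ^ 3 - (9 * I - 7 * z) / (8 * (z - I) ^ 3))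
      (𝓝[{I, -I}ᶜ] I) (𝓝 (-1 / 4)) := by
  have hI2 : I ^ 2 = -1 := I_sq
  have hI3 : I ^ 3 = -I := by rw [pow_succ, hI2]; ring
  have hI4 : I ^ 4 = 1 := I_pow_four
  have hne : (8 * (I + I) ^ 3 : ℂ) ≠ 0 := by
    have : I + I = 2 * I := by ring
    rw [this]
    simp
  have hval : (7 * I + 9 * I) / (8 * (I + I) ^ 3) = (-1 / 4 : ℂ) := by
    rw [div_eq_iff hne]
    linear_combination 16 * hI3
  have hc : ContinuousAt (fun z : ℂ => (7 * z + 9 * I) / (8 * (z + I) ^ 3)) I := by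
    exact ContinuousAt.div (f := fun z : ℂ => 7 * z + 9 * I)
      (g := fun z : ℂ => 8 * (z + I) ^ 3) (by fun_prop) (by fun_prop) hne
  have ht := hc.tendsto.mono_left (nhdsWithin_le_nhds (s := ({I, -I}ᶜ : Set ℂ)))
  simp only [hval] at ht
  refine ht.congr' ?_
  filter_upwards [self_mem_nhdsWithin] with z hz
  simp only [Set.mem_compl_iff, Set.mem_insert_iff, Set.mem_singleton_iff, not_or] at hz
  have h1 : z - I ≠ 0 := sub_ne_zero.2 hz.1
  have h2 : z + I ≠ 0 := fun h => hz.2 (eq_neg_of_add_eq_zero_left h)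
  have hf : 1 + z ^ 2 = (z - I) * (z + I) := by linear_combination hI2
  have key : (7 * z + 9 * I) * (z - I) ^ 3
      = 8 * (-5 * I * z - 3 * I * z ^ 3) - (9 * I - 7 * z) * (z + I) ^ 3 := by
    ring_nf
    simp only [hI2, hI3, hI4]
    ring
  have e1 : (7 * z + 9 * I) / (8 * (z + I) ^ 3)
      = ((7 * z + 9 * I) * (z - I) ^ 3) / (8 * (z + I) ^ 3 * (z - I) ^ 3) := by
    field_simp
  rw [e1, key, hf]
  field_simp
end
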